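/- (Discrete Hardy–Littlewood inequality.) Let d ≥ 2 and let u, v : ℤ^d → [0,∞) be admissible. Then Σ_{x∈ℤ^d} u(x) v(x) ≤ Σ_{x∈ℤ^d} u*(x) v*(x), where the sums are taken in [0,∞] and u* = R_{ℤ^d} u, v* = R_{ℤ^d} v. Moreover, if u is Schwarz symmetric with strictly decreasing values a₁(u) > a₂(u) > a₃(u) > ⋯ and Σ_{x∈ℤ^d} u*(x) v*(x) < ∞, then equality holds if and only if v = v*. -/

import Mathlib

open Filter Topology

noncomputable section

abbrev ZLat (d : ℕ) := Fin d → ℤ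

def stdVec (d : ℕ) (i : Fin d) : Fin d → ℝ := fun j => if j = i then 1 else 0

/-- The set of directions E⃗ ⊆ ℝ^d. -/
def Evec (d : ℕ) : Set (Fin d → ℝ) :=
  {e | (∃ i, e = stdVec d i) ∨
    (∃ i j : Fin d, i < j ∧ e = fun k => (stdVec d i k + stdVec d j k) / 2) ∨
    (∃ i j : Fin d, i < j ∧ e = fun k => (stdVec d i k - stdVec d j k) / 2)}

/-- A fixed enumeration of E⃗ (for d = 2 it is e₁, e₂, (e₁+e₂)/2, (e₁-e₂)/2). -/
def EvecList (d : ℕ) : List (Fin d → ℝ) :=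
  ((List.finRange d).map (stdVec d)) ++
  ((List.finRange d).flatMap fun i => (List.finRange d).filterMap fun j =>
    if i < j then some (fun k => (stdVec d i k + stdVec d j k) / 2) else none) ++
  ((List.finRange d).flatMap fun i => (List.finRange d).filterMap fun j =>
    if i < j then some (fun k => (stdVec d i k - stdVec d j k) / 2) else none)

/-- The n-th largest value of `u`, counted with multiplicity (1-indexed). -/
def nthLargest {α : Type*} (u : α → NNReal) (n : ℕ) : NNReal :=
  sSup {t | ∃ Ω : Finset α, Ω.card = n ∧ ∀ x ∈ Ω, t ≤ u x}

/-- The 1-indexed position of the point with doubled coordinate `m` in the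
spiral order 0, 1, −1, 2, −2, … (for even m) resp. 1/2, −1/2, 3/2, −3/2, … (for odd m). -/
def posIdx (m : ℤ) : ℕ := (if 0 < m then m else 1 - m).toNat

/-- `x` and `y` lie on a common line with direction `e`. -/
def sameLine {d : ℕ} (e : Fin d → ℝ) (x y : ZLat d) : Prop :=
  ∃ c : ℝ, (fun i => (x i : ℝ) - (y i : ℝ)) = c • e

/-- Twice the inner product ⟨e, x⟩, as an integer. -/
def pairing {d : ℕ} (e : Fin d → ℝ) (x : ZLat d) : ℤ :=
  ⌊2 * ∑ i, e i * (x i : ℝ)⌋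

/-- One-step rearrangement `R_e`. -/
def stepR {d : ℕ} (e : Fin d → ℝ) (u : ZLat d → NNReal) : ZLat d → NNReal :=
  fun x => nthLargest (fun y : {y : ZLat d // sameLine e x y} => u y.1) (posIdx (pairing e x))

/-- `R^k u` : k successive one-step rearrangements cycling through the fixed enumeration. -/
def iterR (d : ℕ) (u : ZLat d → NNReal) : ℕ → ZLat d → NNReal
  | 0 => u
  | k + 1 => stepR ((EvecList d).getD (k % (EvecList d).length) 0) (iterR d u k)

/-- The Schwarz rearrangement on ℤ^d : pointwise limit of `R^k u`. -/
def RZd (d : ℕ) (u : ZLat d → NNReal) : ZLat d → NNReal :=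
  fun x => limUnder atTop fun k => iterR d u k x

def Admissible {α : Type*} (u : α → NNReal) : Prop :=
  ∀ t : NNReal, 0 < t → {x | t < u x}.Finite

def Equimeasurable {α : Type*} (u v : α → NNReal) : Prop :=
  ∀ t : NNReal, 0 < t → Nonempty ({x | t < u x} ≃ {x | t < v x})

/-- Graph distance (ℓ¹ distance) on the lattice ℤ^d. -/
def latDist {d : ℕ} (x y : ZLat d) : ℕ := ∑ i, (x i - y i).natAbs

/-- The i-th standard basis vector of ℤ^d. -/
def latE {d : ℕ} (i : Fin d) : ZLat d := fun j => if j = i then 1 else 0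

/-- ‖∇u‖_p^p : the p-Sobolev energy, summing over each edge {x, x+e_i} once. -/
def gradEnergy (d : ℕ) (p : ℝ) (u : ZLat d → NNReal) : ENNReal :=
  ∑' (x : ZLat d) (i : Fin d), ENNReal.ofReal (|(u (x + latE i) : ℝ) - (u x : ℝ)| ^ p)

/-- ‖∇u‖_p. -/
def gradNorm (d : ℕ) (p : ℝ) (u : ZLat d → NNReal) : ENNReal :=
  gradEnergy d p u ^ (1 / p)

/-- Graph automorphism of the lattice graph ℤ^d. -/
def IsLatAuto {d : ℕ} (σ : ZLat d ≃ ZLat d) : Prop :=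
  ∀ x y : ZLat d, latDist (σ x) (σ y) = 1 ↔ latDist x y = 1

def Supermodular (G : NNReal → NNReal → NNReal) : Prop :=
  ∀ s t s₀ t₀ : NNReal, G (s + s₀) t + G s (t + t₀) ≤ G (s + s₀) (t + t₀) + G s t

def StrictlySupermodular (G : NNReal → NNReal → NNReal) : Prop :=
  ∀ s t s₀ t₀ : NNReal, 0 < s₀ → 0 < t₀ →
    G (s + s₀) t + G s (t + t₀) < G (s + s₀) (t + t₀) + G s t

/-- The values of `u` are strictly decreasing: a₁ > a₂ > a₃ > ⋯ . -/
def StrictRan {α : Type*} (u : α → NNReal) : Prop :=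
  ∀ n : ℕ, 0 < n → nthLargest u (n + 1) < nthLargest u n


/-! ### Abstract rearrangement steps -/

lemma lt_nthLargest_iff {α : Type*} (u : α → NNReal) (hb : ∃ M, ∀ x, u x ≤ M) {n : ℕ}
    (hn : 0 < n) (t : NNReal) :
    t < nthLargest u n ↔ (n : ℕ∞) ≤ {x | t < u x}.encard := by
  obtain ⟨M, hM⟩ := hb
  unfold nthLargest
  constructor
  · intro h
    obtain ⟨s, ⟨Ω, hΩ, hs⟩, hts⟩ := exists_lt_of_lt_csSup' h
    rw [← hΩ, ← Set.encard_coe_eq_coe_finsetCard]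
    exact Set.encard_le_encard fun x hx => lt_of_lt_of_le hts (hs x hx)
  · intro h
    obtain ⟨T, hT, hTc⟩ := Set.exists_subset_encard_eq h
    have hfin : T.Finite := Set.finite_of_encard_eq_coe hTc
    lift T to Finset α using hfin
    rw [Set.encard_coe_eq_coe_finsetCard] at hTc
    have hc : T.card = n := by exact_mod_cast hTc
    have hne : T.Nonempty := by
      rw [← Finset.card_pos]; omega
    obtain ⟨m, hm, hmin⟩ := T.exists_min_image u hne
    refine lt_of_lt_of_le (hT hm) (le_csSup ⟨M, ?_⟩ ⟨T, hc, hmin⟩)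
    rintro s ⟨Ω, hΩ, hs⟩
    obtain ⟨x, hx⟩ := Finset.card_pos.1 (hΩ ▸ hn)
    exact (hs x hx).trans (hM x)

lemma Admissible.bdd {α : Type*} {u : α → NNReal} (hu : Admissible u) : ∃ M, ∀ x, u x ≤ M := by
  obtain ⟨M, hM⟩ := ((hu 1 one_pos).image u).bddAbove
  refine ⟨max M 1, fun x => ?_⟩
  by_cases h : 1 < u x
  · exact le_max_of_le_left (hM ⟨x, h, rfl⟩)
  · exact le_max_of_le_right (not_lt.1 h)

lemma eq_of_levels {α : Type*} {u v : α → NNReal}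
    (h : ∀ t : NNReal, 0 < t → {x | t < u x} = {x | t < v x}) : u = v := by
  have key : ∀ u v : α → NNReal, (∀ t : NNReal, 0 < t → {x | t < u x} = {x | t < v x}) →
      ∀ x, u x ≤ v x := by
    intro u v h x
    by_contra hc
    rw [not_le] at hc
    obtain ⟨t, h1, h2⟩ := exists_between hc
    have : x ∈ {x | t < v x} := by
      rw [← h t (pos_of_gt h1)]; exact h2
    exact absurd h1 (not_lt.2 (le_of_lt this))
  funext x
  exact le_antisymm (key u v h x) (key v u (fun t ht => (h t ht).symm) x)

/-- A partition into infinite classes, each enumerated by a position function along which the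
potential `φ` is strictly increasing. -/
structure StepD (X : Type*) (φ : X → ℕ) where
  r : X → X → Prop
  pos : X → ℕ
  eqv : Equivalence r
  pos_pos : ∀ x, 0 < pos x
  inj : ∀ x y, r x y → pos x = pos y → x = y
  surj : ∀ x n, 0 < n → ∃ y, r x y ∧ pos y = n
  mono : ∀ x y, r x y → pos x < pos y → φ x < φ y

namespace StepD

variable {X : Type*} {φ : X → ℕ} (S : StepD X φ)

/-- Rearrangement of sets. -/
def RS (A : Set X) : Set X := {x | (S.pos x : ℕ∞) ≤ {y | S.r x y ∧ y ∈ A}.encard}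

/-- Rearrangement of functions. -/
def stp (u : X → NNReal) : X → NNReal :=
  fun x => nthLargest (fun y : {y : X // S.r x y} => u y.1) (S.pos x)

lemma lt_stp_iff {u : X → NNReal} (hb : ∃ M, ∀ x, u x ≤ M) (t : NNReal) (x : X) :
    t < S.stp u x ↔ (S.pos x : ℕ∞) ≤ {y | S.r x y ∧ t < u y}.encard := by
  unfold stp
  obtain ⟨M, hM⟩ := hb
  rw [lt_nthLargest_iff (fun y : {y : X // S.r x y} => u y.1) ⟨M, fun y => hM y.1⟩ (S.pos_pos x),
    ← (Subtype.val_injective).encard_image]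
  have : (Set.image Subtype.val {y : {y : X // S.r x y} | t < u y.1}) = {y | S.r x y ∧ t < u y} := by
    ext y; simp [and_comm]
  rw [this]

lemma level_stp {u : X → NNReal} (hb : ∃ M, ∀ x, u x ≤ M) (t : NNReal) :
    {x | t < S.stp u x} = S.RS {x | t < u x} := by
  ext x
  exact S.lt_stp_iff hb t x

lemma RS_mono {A B : Set X} (h : A ⊆ B) : S.RS A ⊆ S.RS B := by
  intro x hx
  have hsub : {y | S.r x y ∧ y ∈ A} ⊆ {y | S.r x y ∧ y ∈ B} := fun y hy => ⟨hy.1, h hy.2⟩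
  exact le_trans (show (S.pos x : ℕ∞) ≤ _ from hx) (Set.encard_le_encard hsub)

open Classical in
lemma RS_key (A : Finset X) : ∃ f : X → X, Set.InjOn f A ∧ Set.image f A = S.RS A ∧
    (∀ a ∈ A, φ (f a) ≤ φ a ∧ (φ (f a) = φ a → f a = a)) ∧
    (∀ a ∈ A, f a ≠ a → ∃ y, y ∉ A ∧ S.r a y ∧ S.pos y < S.pos a) := by
  set rk : X → ℕ := fun a => (A.filter (fun b => S.r a b ∧ S.pos b ≤ S.pos a)).card with hrk
  have rk_pos : ∀ a ∈ A, 0 < rk a := fun a ha =>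
    Finset.card_pos.2 ⟨a, by simp [ha, S.eqv.refl a]⟩
  have hex : ∀ a, ∃ y, a ∈ A → S.r a y ∧ S.pos y = rk a := by
    intro a
    by_cases ha : a ∈ A
    · obtain ⟨y, hy⟩ := S.surj a (rk a) (rk_pos a ha)
      exact ⟨y, fun _ => hy⟩
    · exact ⟨a, fun h => absurd h ha⟩
  choose f hf using hex
  have hlt : ∀ a ∈ A, ∀ b ∈ A, S.r a b → S.pos a < S.pos b → rk a < rk b := by
    intro a ha b hb hab hp
    apply Finset.card_lt_card
    rw [Finset.ssubset_iff_of_subset]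
    · refine ⟨b, by simp [hb, S.eqv.refl b], by simp [hb, hp]⟩
    · intro c hc
      simp only [Finset.mem_filter] at hc ⊢
      exact ⟨hc.1, S.eqv.trans (S.eqv.symm hab) hc.2.1, by omega⟩
  have hrkinj : ∀ a ∈ A, ∀ b ∈ A, S.r a b → rk a = rk b → a = b := by
    intro a ha b hb hab h
    apply S.inj a b hab
    rcases lt_trichotomy (S.pos a) (S.pos b) with h1 | h1 | h1
    · have := hlt a ha b hb hab h1; omega
    · exact h1
    · have := hlt b hb a ha (S.eqv.symm hab) h1; omega
  have himg : ∀ a, (A.filter (fun b => S.r a b ∧ S.pos b ≤ S.pos a)).image S.pos ⊆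
      Finset.Icc 1 (S.pos a) := by
    intro a n hn
    simp only [Finset.mem_image, Finset.mem_filter] at hn
    obtain ⟨b, ⟨_, _, h⟩, rfl⟩ := hn
    simp [h]
    exact S.pos_pos b
  have hinjpos : ∀ a, Set.InjOn S.pos
      (A.filter (fun b => S.r a b ∧ S.pos b ≤ S.pos a) : Finset X) := by
    intro a b hb c hc h
    simp only [Finset.coe_filter, Set.mem_ofPred_eq] at hb hc
    exact S.inj b c (S.eqv.trans (S.eqv.symm hb.2.1) hc.2.1) h
  have hrkle : ∀ a, rk a ≤ S.pos a := by
    intro a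
    have := Finset.card_le_card (himg a)
    rw [Finset.card_image_of_injOn (hinjpos a)] at this
    simpa using this
  refine ⟨f, ?_, ?_, ?_, ?_⟩
  · intro a ha b hb hab
    have h1 := hf a ha
    have h2 := hf b hb
    rw [← hab] at h2
    exact hrkinj a ha b hb (S.eqv.trans h1.1 (S.eqv.symm h2.1)) (by omega)
  · ext x
    have hC : {y | S.r x y ∧ y ∈ (A : Set X)} = ((A.filter (fun b => S.r x b) : Finset X) : Set X) := by
      ext y; simp [and_comm]
    unfold RS
    rw [Set.mem_ofPred_eq, hC, Set.encard_coe_eq_coe_finsetCard, Nat.cast_le]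
    constructor
    · rintro ⟨a, ha, rfl⟩
      rw [(hf a ha).2]
      apply Finset.card_le_card
      intro c hc
      simp only [Finset.mem_filter] at hc ⊢
      exact ⟨hc.1, S.eqv.trans (S.eqv.symm (hf a ha).1) hc.2.1⟩
    · intro hx
      have hsub : (A.filter (fun b => S.r x b)).image rk ⊆
          Finset.Icc 1 (A.filter (fun b => S.r x b)).card := by
        intro n hn
        simp only [Finset.mem_image, Finset.mem_filter] at hn
        obtain ⟨b, ⟨hb, hxb⟩, rfl⟩ := hn
        rw [Finset.mem_Icc]
        refine ⟨rk_pos b hb, Finset.card_le_card ?_⟩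
        intro c hc
        simp only [Finset.mem_filter] at hc ⊢
        exact ⟨hc.1, S.eqv.trans hxb hc.2.1⟩
      have heq := Finset.eq_of_subset_of_card_le hsub (by
        rw [Finset.card_image_of_injOn]
        · simp
        · intro a ha b hb h
          simp only [Finset.coe_filter, Set.mem_ofPred_eq] at ha hb
          exact hrkinj a ha.1 b hb.1 (S.eqv.trans (S.eqv.symm ha.2) hb.2) h)
      have hm : S.pos x ∈ (A.filter (fun b => S.r x b)).image rk := by
        rw [heq, Finset.mem_Icc]; exact ⟨S.pos_pos x, hx⟩
      simp only [Finset.mem_image, Finset.mem_filter] at hm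
      obtain ⟨a, ⟨ha, hxa⟩, h⟩ := hm
      refine ⟨a, ha, ?_⟩
      have := hf a ha
      exact S.inj _ _ (S.eqv.symm (S.eqv.trans hxa this.1)) (by omega)
  · intro a ha
    have h := hf a ha
    rcases (hrkle a).lt_or_eq with h1 | h1
    · have := S.mono (f a) a (S.eqv.symm h.1) (by omega)
      exact ⟨this.le, fun h => by omega⟩
    · have := S.inj (f a) a (S.eqv.symm h.1) (by omega)
      rw [this]; simp
  · intro a ha hne
    have h := hf a ha
    by_contra hcon
    push Not at hcon
    apply hne
    apply S.inj (f a) a (S.eqv.symm h.1)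
    rw [h.2]
    apply le_antisymm (hrkle a)
    have : Finset.Icc 1 (S.pos a) ⊆
        (A.filter (fun b => S.r a b ∧ S.pos b ≤ S.pos a)).image S.pos := by
      intro n hn
      rw [Finset.mem_Icc] at hn
      obtain ⟨y, hy, hyn⟩ := S.surj a n (by omega)
      rw [Finset.mem_image]
      refine ⟨y, ?_, hyn⟩
      rw [Finset.mem_filter]
      refine ⟨?_, hy, by omega⟩
      by_contra hyA
      have h3 := hcon y hyA hy
      have : y = a := (S.inj a y hy (by omega)).symm
      exact hyA (this ▸ ha)
    have := Finset.card_le_card this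
    rw [Finset.card_image_of_injOn (hinjpos a)] at this
    simpa using this

lemma RS_finite {A : Set X} (hA : A.Finite) : (S.RS A).Finite := by
  lift A to Finset X using hA
  obtain ⟨f, -, h, -⟩ := S.RS_key A
  rw [← h]
  exact A.finite_toSet.image f

lemma RS_encard {A : Set X} (hA : A.Finite) : (S.RS A).encard = A.encard := by
  lift A to Finset X using hA
  obtain ⟨f, hi, h, -⟩ := S.RS_key A
  rw [← h, hi.encard_image]

/-- The potential of a set. -/
def pot (φ : X → ℕ) (A : Set X) : ℕ := ∑ᶠ x ∈ A, φ x

lemma RS_pot {A : Set X} (hA : A.Finite) :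
    pot φ (S.RS A) ≤ pot φ A ∧ (pot φ (S.RS A) = pot φ A → S.RS A = A) := by
  lift A to Finset X using hA
  obtain ⟨f, hi, h, hp, -⟩ := S.RS_key A
  have h1 : pot φ (S.RS A) = ∑ a ∈ A, φ (f a) := by
    unfold pot
    rw [← h, finsum_mem_image hi, finsum_mem_coe_finset]
  have h2 : pot φ (A : Set X) = ∑ a ∈ A, φ a := by
    unfold pot
    rw [finsum_mem_coe_finset]
  rw [h1, h2]
  refine ⟨Finset.sum_le_sum fun a ha => (hp a ha).1, fun he => ?_⟩
  have := (Finset.sum_eq_sum_iff_of_le fun a ha => (hp a ha).1).1 he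
  rw [← h]
  ext x
  constructor
  · rintro ⟨a, ha, rfl⟩
    rw [(hp a ha).2 (this a ha)]; exact ha
  · intro hx
    exact ⟨x, hx, (hp x hx).2 (this x hx)⟩

lemma RS_ne {A : Set X} (hA : A.Finite) (hne : S.RS A ≠ A) :
    ∃ a ∈ A, ∃ y, y ∉ A ∧ S.r a y ∧ S.pos y < S.pos a := by
  lift A to Finset X using hA
  obtain ⟨f, hi, h, hp, hy⟩ := S.RS_key A
  by_contra hcon
  apply hne
  have : ∀ a ∈ A, f a = a := by
    intro a ha
    by_contra hfa
    obtain ⟨y, hy1, hy2⟩ := hy a ha hfa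
    exact hcon ⟨a, ha, y, by simpa using hy1, hy2⟩
  rw [← h]
  ext x
  constructor
  · rintro ⟨a, ha, rfl⟩
    rw [this a ha]; exact ha
  · intro hx
    exact ⟨x, hx, this x hx⟩

lemma stp_admissible {u : X → NNReal} (hu : Admissible u) : Admissible (S.stp u) := by
  intro t ht
  rw [S.level_stp hu.bdd]
  exact S.RS_finite (hu t ht)

end StepD

section iteration

variable {X : Type*} {φ : X → ℕ}

/-- Iterated rearrangement of functions. -/
def itF (σ : ℕ → StepD X φ) (u : X → NNReal) : ℕ → X → NNReal
  | 0 => u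
  | k + 1 => (σ k).stp (itF σ u k)

/-- Iterated rearrangement of sets. -/
def itS (σ : ℕ → StepD X φ) (A : Set X) : ℕ → Set X
  | 0 => A
  | k + 1 => (σ k).RS (itS σ A k)

lemma itF_admissible (σ : ℕ → StepD X φ) {u : X → NNReal} (hu : Admissible u) (k : ℕ) :
    Admissible (itF σ u k) := by
  induction k with
  | zero => exact hu
  | succ k ih => exact (σ k).stp_admissible ih

lemma itF_level (σ : ℕ → StepD X φ) {u : X → NNReal} (hu : Admissible u) (t : NNReal) (k : ℕ) :
    {x | t < itF σ u k x} = itS σ {x | t < u x} k := by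
  induction k with
  | zero => rfl
  | succ k ih =>
    simp only [itF, itS]
    rw [(σ k).level_stp (itF_admissible σ hu k).bdd, ih]

lemma itS_finite (σ : ℕ → StepD X φ) {A : Set X} (hA : A.Finite) (k : ℕ) :
    (itS σ A k).Finite := by
  induction k with
  | zero => exact hA
  | succ k ih => exact (σ k).RS_finite ih

lemma itS_encard (σ : ℕ → StepD X φ) {A : Set X} (hA : A.Finite) (k : ℕ) :
    (itS σ A k).encard = A.encard := by
  induction k with
  | zero => rfl
  | succ k ih =>
    simp only [itS]
    rw [(σ k).RS_encard (itS_finite σ hA k), ih]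

lemma itS_mono (σ : ℕ → StepD X φ) {A B : Set X} (h : A ⊆ B) (k : ℕ) :
    itS σ A k ⊆ itS σ B k := by
  induction k with
  | zero => exact h
  | succ k ih => exact (σ k).RS_mono ih

lemma itS_pot_anti (σ : ℕ → StepD X φ) {A : Set X} (hA : A.Finite) :
    Antitone fun k => StepD.pot φ (itS σ A k) :=
  antitone_nat_of_succ_le fun k => ((σ k).RS_pot (itS_finite σ hA k)).1

lemma itS_const (σ : ℕ → StepD X φ) {A : Set X} (hA : A.Finite) (k₀ : ℕ)
    (k : ℕ) (hk : StepD.pot φ (itS σ A (k₀ + k)) = StepD.pot φ (itS σ A k₀)) :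
    itS σ A (k₀ + k) = itS σ A k₀ := by
  induction k with
  | zero => rfl
  | succ k ih =>
    have anti := itS_pot_anti σ hA
    have h1 : StepD.pot φ (itS σ A (k₀ + k)) ≤ StepD.pot φ (itS σ A k₀) := anti (by omega)
    have h2 : StepD.pot φ (itS σ A (k₀ + (k + 1))) ≤ StepD.pot φ (itS σ A (k₀ + k)) :=
      anti (by omega)
    have h3 := ih (by omega)
    rw [← h3]
    exact ((σ (k₀ + k)).RS_pot (itS_finite σ hA (k₀ + k))).2 (by
      have : itS σ A (k₀ + (k + 1)) = (σ (k₀ + k)).RS (itS σ A (k₀ + k)) := rfl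
      rw [← this]; omega)

lemma itS_eventually (σ : ℕ → StepD X φ) {A : Set X} (hA : A.Finite) :
    ∃ k₀, ∀ k, itS σ A (k₀ + k) = itS σ A k₀ := by
  have anti := itS_pot_anti σ hA
  obtain ⟨k₀, hk₀⟩ := Nat.sInf_mem (Set.range_nonempty fun k => StepD.pot φ (itS σ A k))
  refine ⟨k₀, fun k => itS_const σ hA k₀ k (le_antisymm (anti (by omega)) ?_)⟩
  have := Nat.sInf_le (Set.mem_range_self (f := fun k => StepD.pot φ (itS σ A k)) (k₀ + k))
  rw [← hk₀] at this
  exact this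

/-- Convergence of level sets. -/
def LConv (f : ℕ → X → NNReal) (g : X → NNReal) : Prop :=
  ∀ t : NNReal, 0 < t → ∀ᶠ k in atTop, {x | t < f k x} = {x | t < g x}

lemma LConv.tendsto {f : ℕ → X → NNReal} {g : X → NNReal} (h : LConv f g) (x : X) :
    Tendsto (fun k => f k x) atTop (𝓝 (g x)) := by
  rw [tendsto_order]
  constructor
  · intro a ha
    obtain ⟨b, hab, hb⟩ := exists_between ha
    filter_upwards [h b (pos_of_gt hab)] with k hk
    have : x ∈ {x | b < f k x} := by rw [hk]; exact hb
    exact hab.trans this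
  · intro a ha
    obtain ⟨b, hb, hab⟩ := exists_between ha
    filter_upwards [h b (pos_of_gt hb)] with k hk
    by_contra hc
    have : x ∈ {x | b < g x} := by rw [← hk]; exact hab.trans_le (not_lt.1 hc)
    exact absurd hb (not_lt.2 (le_of_lt this))

lemma Admissible.level_gap {u : X → NNReal} (hu : Admissible u) {t : NNReal} (ht : 0 < t) :
    ∃ s, t < s ∧ {x | s < u x} = {x | t < u x} := by
  rcases Set.eq_empty_or_nonempty {x | t < u x} with he | hne
  · refine ⟨t + 1, by simp, ?_⟩
    rw [he]
    ext x
    have : x ∉ {x | t < u x} := by rw [he]; simp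
    simp only [Set.mem_ofPred_eq, not_lt, Set.mem_empty_iff_false, iff_false] at this ⊢
    exact this.trans (by simp)
  · obtain ⟨m, hm, hmin⟩ := Set.exists_min_image _ u (hu t ht) hne
    obtain ⟨s, hs1, hs2⟩ := exists_between (show t < u m from hm)
    refine ⟨s, hs1, ?_⟩
    ext x
    exact ⟨fun h => hs1.trans h, fun h => hs2.trans_le (hmin x h)⟩

lemma exists_LConv (σ : ℕ → StepD X φ) {u : X → NNReal} (hu : Admissible u) :
    ∃ g, LConv (itF σ u) g := by
  let P : X → Set NNReal := fun x => {t | 0 < t ∧ ∀ᶠ k in atTop, t < itF σ u k x}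
  have hbdd : ∀ x, BddAbove (P x) := by
    obtain ⟨M, hM⟩ := hu.bdd
    intro x
    refine ⟨M, ?_⟩
    rintro t ⟨_, ht⟩
    by_contra hc
    rw [not_le] at hc
    obtain ⟨k, hk⟩ := ht.exists
    have h1 : x ∈ {x | t < itF σ u k x} := hk
    rw [itF_level σ hu] at h1
    have h2 : {x | t < u x} = ∅ := by
      ext y; simpa using (hM y).trans hc.le
    have h3 := itS_encard σ (Set.finite_empty (α := X)) k
    rw [Set.encard_empty, Set.encard_eq_zero] at h3
    rw [h2, h3] at h1
    exact h1
  have key : ∀ t, 0 < t → ∀ x, t < sSup (P x) ↔ ∀ᶠ k in atTop, t < itF σ u k x := by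
    intro t ht x
    constructor
    · intro h
      obtain ⟨s, ⟨_, hs⟩, hts⟩ := exists_lt_of_lt_csSup' h
      filter_upwards [hs] with k hk using hts.trans hk
    · intro h
      obtain ⟨s, hts, hs⟩ := hu.level_gap ht
      refine hts.trans_le (le_csSup (hbdd x) ⟨pos_of_gt hts, ?_⟩)
      filter_upwards [h] with k hk
      have : x ∈ {x | t < itF σ u k x} := hk
      rw [itF_level σ hu, ← hs, ← itF_level σ hu] at this
      exact this
  refine ⟨fun x => sSup (P x), fun t ht => ?_⟩
  obtain ⟨k₀, hk₀⟩ := itS_eventually σ (hu t ht)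
  have hst : ∀ k, k₀ ≤ k → {x | t < itF σ u k x} = itS σ {x | t < u x} k₀ := by
    intro k hk
    rw [itF_level σ hu]
    obtain ⟨j, rfl⟩ := Nat.exists_eq_add_of_le hk
    exact hk₀ j
  filter_upwards [eventually_ge_atTop k₀] with k hk
  ext x
  simp only [Set.mem_ofPred_eq]
  rw [key t ht x]
  constructor
  · intro h
    filter_upwards [eventually_ge_atTop k₀] with j hj
    have : x ∈ {x | t < itF σ u k x} := h
    rw [hst k hk, ← hst j hj] at this
    exact this
  · intro h
    obtain ⟨j, hj, hj'⟩ := (h.and (eventually_ge_atTop k₀)).exists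
    have : x ∈ {x | t < itF σ u j x} := hj
    rw [hst j hj', ← hst k hk] at this
    exact this

lemma itF_const (σ : ℕ → StepD X φ) {u : X → NNReal} (hu : Admissible u)
    (h : LConv (itF σ u) u) (k : ℕ) : itF σ u k = u := by
  apply eq_of_levels
  intro t ht
  obtain ⟨K, hK, hkK⟩ := ((h t ht).and (eventually_ge_atTop k)).exists
  rw [itF_level σ hu] at hK ⊢
  have anti := itS_pot_anti σ (hu t ht)
  have h1 := anti hkK
  have h2 := anti (Nat.zero_le k)
  have h3 := itS_const σ (hu t ht) 0 k (by
    simp only [zero_add]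
    simp only [hK] at h1
    exact le_antisymm h2 h1)
  rw [zero_add] at h3
  exact h3

lemma tsum_mul_le [Countable X] {u v u' v' : X → NNReal}
    (h : ∀ s t : NNReal, 0 < s → 0 < t →
      ({x | s < u x} ∩ {x | t < v x}).encard ≤ ({x | s < u' x} ∩ {x | t < v' x}).encard) :
    ∑' x, ((u x * v x : NNReal) : ENNReal) ≤ ∑' x, ((u' x * v' x : NNReal) : ENNReal) := by
  let E : NNReal → NNReal → Set (ℝ × ℝ) := fun a b => Set.Ioo 0 (a : ℝ) ×ˢ Set.Ioo 0 (b : ℝ)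
  have hE : ∀ a b, MeasurableSet (E a b) := fun a b => measurableSet_Ioo.prod measurableSet_Ioo
  have key : ∀ u v : X → NNReal, ∑' x, ((u x * v x : NNReal) : ENNReal) =
      ∫⁻ p : ℝ × ℝ, ∑' x, (E (u x) (v x)).indicator 1 p := by
    intro u v
    rw [MeasureTheory.lintegral_tsum]
    · congr 1
      funext x
      rw [MeasureTheory.lintegral_indicator_one (hE _ _), MeasureTheory.Measure.volume_eq_prod,
        MeasureTheory.Measure.prod_prod]
      simp
    · intro x
      exact (measurable_one.indicator (hE _ _)).aemeasurable
  rw [key, key]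
  apply MeasureTheory.lintegral_mono
  rintro ⟨s, t⟩
  by_cases hs : 0 < s
  · by_cases ht : 0 < t
    · have count : ∀ u v : X → NNReal, ∑' x, (E (u x) (v x)).indicator (1 : ℝ × ℝ → ENNReal) (s, t) =
          ((({x | s.toNNReal < u x} ∩ {x | t.toNNReal < v x}).encard : ℕ∞) : ENNReal) := by
        intro u v
        rw [← ENNReal.tsum_set_one,
          tsum_subtype ({x | s.toNNReal < u x} ∩ {x | t.toNNReal < v x}) (fun _ => (1 : ENNReal))]
        congr 1
        funext x
        simp only [Set.indicator, E]
        congr 1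
        simp [hs, ht, Real.toNNReal_lt_iff_lt_coe, hs.le, ht.le]
      simp only [count]
      exact_mod_cast h _ _ (by simpa using hs) (by simpa using ht)
    · simp [E, Set.indicator, ht]
  · simp [E, Set.indicator, hs]

lemma itF_HL [Countable X] (σ : ℕ → StepD X φ) {u v u' v' : X → NNReal} (hu : Admissible u)
    (hv : Admissible v) (hu' : LConv (itF σ u) u') (hv' : LConv (itF σ v) v') :
    ∑' x, ((u x * v x : NNReal) : ENNReal) ≤ ∑' x, ((u' x * v' x : NNReal) : ENNReal) := by
  apply tsum_mul_le
  intro s t hs ht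
  obtain ⟨k, h1, h2⟩ := ((hu' s hs).and (hv' t ht)).exists
  rw [← h1, ← h2, itF_level σ hu, itF_level σ hv]
  rw [← itS_encard σ ((hu s hs).inter_of_left _) k]
  exact Set.encard_le_encard (Set.subset_inter (itS_mono σ Set.inter_subset_left k)
    (itS_mono σ Set.inter_subset_right k))

end iteration

section strict

variable {X : Type*} {φ : X → ℕ}

lemma itF_tail (σ : ℕ → StepD X φ) (u : X → NNReal) (k j : ℕ) :
    itF σ u (k + j) = itF (fun i => σ (k + i)) (itF σ u k) j := by
  induction j with
  | zero => rfl
  | succ j ih =>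
    show (σ (k + j)).stp (itF σ u (k + j)) = _
    rw [ih]
    rfl

lemma itF_congr_head (τ : ℕ → StepD X φ) {v w : X → NNReal} (h : (τ 0).stp v = (τ 0).stp w)
    (j : ℕ) : itF τ v (j + 1) = itF τ w (j + 1) := by
  induction j with
  | zero => exact h
  | succ j ih =>
    show (τ (j + 1)).stp (itF τ v (j + 1)) = (τ (j + 1)).stp (itF τ w (j + 1))
    rw [ih]

lemma LConv.shift {f : ℕ → X → NNReal} {g : X → NNReal} (h : LConv f g) (k : ℕ) :
    LConv (fun j => f (k + j)) g := by
  intro t ht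
  have : Tendsto (fun j => k + j) atTop atTop := 
    tendsto_atTop_mono (fun j => by simp) tendsto_id
  exact this.eventually (h t ht)

lemma LConv.congr {f f' : ℕ → X → NNReal} {g : X → NNReal} (h : LConv f g)
    (hf : ∀ j, f (j + 1) = f' (j + 1)) : LConv f' g := by
  intro t ht
  filter_upwards [h t ht, eventually_ge_atTop 1] with k hk hk1
  obtain ⟨j, rfl⟩ := Nat.exists_eq_add_of_le' hk1
  rw [← hf]; exact hk

lemma LConv.unique {f : ℕ → X → NNReal} {g g' : X → NNReal} (h : LConv f g) (h' : LConv f g') :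
    g = g' := by
  funext x
  exact tendsto_nhds_unique (h.tendsto x) (h'.tendsto x)

/-- A function fixed by a step is monotone along the classes. -/
lemma StepD.anti_of_fixed (S : StepD X φ) {u : X → NNReal} (hu : Admissible u) (h : S.stp u = u)
    {x y : X} (hxy : S.r x y) (hp : S.pos y < S.pos x) : u x ≤ u y := by
  by_contra hc
  rw [not_le] at hc
  have h1 : u y < S.stp u x := by rw [h]; exact hc
  rw [S.lt_stp_iff hu.bdd] at h1
  have h2 : u y < S.stp u y := by
    rw [S.lt_stp_iff hu.bdd]
    have : {z | S.r y z ∧ u y < u z} = {z | S.r x z ∧ u y < u z} := by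
      ext z
      exact ⟨fun hz => ⟨S.eqv.trans hxy hz.1, hz.2⟩,
        fun hz => ⟨S.eqv.trans (S.eqv.symm hxy) hz.1, hz.2⟩⟩
    rw [this]
    exact le_trans (by exact_mod_cast hp.le) h1
  rw [h] at h2
  exact lt_irrefl _ h2

open Classical in
lemma StepD.stp_swap (S : StepD X φ) {v : X → NNReal} (hv : Admissible v) {a b : X}
    (hab : S.r a b) (hv' : Admissible (v ∘ Equiv.swap a b)) :
    S.stp (v ∘ Equiv.swap a b) = S.stp v := by
  apply eq_of_levels
  intro t _
  ext x
  simp only [Set.mem_ofPred_eq]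
  rw [S.lt_stp_iff hv.bdd, S.lt_stp_iff hv'.bdd]
  have hr : ∀ y, S.r y (Equiv.swap a b y) := by
    intro y
    by_cases h1 : y = a
    · subst h1; simpa using hab
    · by_cases h2 : y = b
      · subst h2; simpa using S.eqv.symm hab
      · rw [Equiv.swap_apply_of_ne_of_ne h1 h2]; exact S.eqv.refl y
  have : {y | S.r x y ∧ t < v y} =
      Set.image (Equiv.swap a b) {y | S.r x y ∧ t < (v ∘ Equiv.swap a b) y} := by
    ext y
    constructor
    · rintro ⟨h1, h2⟩
      exact ⟨Equiv.swap a b y, ⟨S.eqv.trans h1 (hr y), by simpa using h2⟩, by simp⟩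
    · rintro ⟨z, ⟨h1, h2⟩, rfl⟩
      exact ⟨S.eqv.trans h1 (hr z), h2⟩
  rw [this, (Equiv.injective _).encard_image]

open Classical in
lemma tsum_swap_lt {u v : X → NNReal} {a b : X} (hu : u a < u b) (hv : v b < v a)
    (hfin : ∑' x, ((u x * (v ∘ Equiv.swap a b) x : NNReal) : ENNReal) ≠ ⊤) :
    ∑' x, ((u x * v x : NNReal) : ENNReal) <
      ∑' x, ((u x * (v ∘ Equiv.swap a b) x : NNReal) : ENNReal) := by
  have hne : b ≠ a := fun h => by subst h; exact lt_irrefl _ hu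
  have split : ∀ f : X → ENNReal, ∑' x, f x =
      f a + f b + ∑' x, if x = b then 0 else if x = a then 0 else f x := by
    intro f
    rw [ENNReal.summable.tsum_eq_add_tsum_ite' a,
      ENNReal.summable.tsum_eq_add_tsum_ite' b, add_assoc]
    simp [hne]
  rw [split] at hfin
  rw [split, split (fun x => ((u x * (v ∘ Equiv.swap a b) x : NNReal) : ENNReal))]
  have hrest : (∑' x, if x = b then 0 else if x = a then 0 else ((u x * v x : NNReal) : ENNReal)) =
      ∑' x, if x = b then 0 else if x = a then 0 else
        ((u x * (v ∘ Equiv.swap a b) x : NNReal) : ENNReal) := by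
    congr 1
    funext x
    split_ifs with h1 h2
    · rfl
    · rfl
    · simp [Equiv.swap_apply_of_ne_of_ne h2 h1]
  rw [hrest]
  refine ENNReal.add_lt_add_right (fun h => hfin (by rw [h]; simp)) ?_
  simp only [Function.comp, Equiv.swap_apply_left, Equiv.swap_apply_right]
  have : u a * v a + u b * v b < u a * v b + u b * v a := by
    rw [← NNReal.coe_lt_coe] at hu hv ⊢
    push_cast
    nlinarith
  exact_mod_cast this

open Classical in
lemma itF_strict [Countable X] (σ : ℕ → StepD X φ) {u v v' : X → NNReal} (hu : Admissible u)
    (hv : Admissible v) (hinj : Function.Injective u)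
    (hu' : LConv (itF σ u) u) (hv' : LConv (itF σ v) v')
    (hfin : ∑' x, ((u x * v' x : NNReal) : ENNReal) < ⊤)
    (heq : ∑' x, ((u x * v x : NNReal) : ENNReal) = ∑' x, ((u x * v' x : NNReal) : ENNReal)) :
    v = v' := by
  by_contra hne
  have hex : ∃ k, itF σ v (k + 1) ≠ v := by
    by_contra hcon
    push Not at hcon
    apply hne
    have : LConv (itF σ v) v := by
      intro t _
      filter_upwards [eventually_ge_atTop 1] with k hk1
      obtain ⟨j, rfl⟩ := Nat.exists_eq_add_of_le' hk1
      rw [hcon]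
    exact this.unique hv'
  obtain ⟨k, hk, hmin⟩ : ∃ k, itF σ v (k + 1) ≠ v ∧ itF σ v k = v := by
    refine ⟨Nat.find hex, Nat.find_spec hex, ?_⟩
    rcases h : Nat.find hex with _ | j
    · rfl
    · have := Nat.find_min hex (m := j) (by omega)
      rwa [not_not] at this
  have hstep : (σ k).stp v ≠ v := by
    intro h
    apply hk
    show (σ k).stp (itF σ v k) = v
    rw [hmin, h]
  have hul : (σ k).stp u = u := by
    have h1 := itF_const σ hu hu' (k + 1)
    have h2 := itF_const σ hu hu' k
    change (σ k).stp (itF σ u k) = u at h1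
    rwa [h2] at h1
  obtain ⟨t, ht, hA⟩ : ∃ t : NNReal, 0 < t ∧ (σ k).RS {x | t < v x} ≠ {x | t < v x} := by
    by_contra hcon
    push Not at hcon
    apply hstep
    apply eq_of_levels
    intro t ht
    rw [(σ k).level_stp hv.bdd, hcon t ht]
  obtain ⟨a, ha, b, hb, hab, hpos⟩ := (σ k).RS_ne (hv t ht) hA
  have hvab : v b < v a := lt_of_le_of_lt (not_lt.1 hb) ha
  have huab : u a < u b := by
    refine lt_of_le_of_ne ((σ k).anti_of_fixed hu hul hab hpos) ?_
    intro h
    have := hinj h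
    subst this
    exact lt_irrefl _ hpos
  have hadm : Admissible (v ∘ Equiv.swap a b) := by
    intro s hs
    exact Set.Finite.preimage (s := {x | s < v x}) (f := Equiv.swap a b)
      (Equiv.injective _).injOn (hv s hs)
  let τ : ℕ → StepD X φ := fun i => σ (k + i)
  have hc1 : LConv (itF τ v) v' := by
    have := hv'.shift k
    have h2 : (fun j => itF σ v (k + j)) = itF τ v := by
      funext j
      rw [itF_tail, hmin]
    rwa [h2] at this
  have hc2 : LConv (itF τ (v ∘ Equiv.swap a b)) v' :=
    hc1.congr fun j => itF_congr_head τ ((σ k).stp_swap hv hab hadm).symm j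
  have hc3 : LConv (itF τ u) u := by
    have := hu'.shift k
    have h2 : (fun j => itF σ u (k + j)) = itF τ u := by
      funext j
      rw [itF_tail, itF_const σ hu hu' k]
    rwa [h2] at this
  have hle := itF_HL τ hu hadm hc3 hc2
  have hlt := tsum_swap_lt huab hvab (ne_top_of_le_ne_top hfin.ne hle)
  exact absurd heq (ne_of_lt (hlt.trans_le hle))

lemma inj_of_strictRan {u : X → NNReal} (hu : Admissible u) (hpos : ∀ x, 0 < u x)
    (hs : StrictRan u) : Function.Injective u := by
  intro a b hab
  by_contra hne
  have hfin := hu (u a) (hpos a)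
  obtain ⟨n, hn⟩ : ∃ n : ℕ, {x | u a < u x}.encard = n := ⟨_, hfin.cast_ncard_eq.symm⟩
  have h1 : nthLargest u (n + 1) ≤ u a := by
    by_contra hc
    rw [not_le, lt_nthLargest_iff u hu.bdd (by omega), hn] at hc
    have : n + 1 ≤ n := by exact_mod_cast hc
    omega
  have h2 : u a ≤ nthLargest u (n + 1 + 1) := by
    by_contra hc
    rw [not_le] at hc
    have : nthLargest u (n + 1 + 1) < nthLargest u (n + 1 + 1) := by
      rw [lt_nthLargest_iff u hu.bdd (by omega)]
      have hsub : insert a (insert b {x | u a < u x}) ⊆ {x | nthLargest u (n + 1 + 1) < u x} := by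
        rintro x (rfl | rfl | hx)
        · exact hc
        · rw [hab] at hc; exact hc
        · exact hc.trans hx
      refine le_trans ?_ (Set.encard_le_encard hsub)
      rw [Set.encard_insert_of_notMem, Set.encard_insert_of_notMem, hn]
      · push_cast; exact le_rfl
      · simp [hab]
      · simp [hne]
    exact lt_irrefl _ this
  exact absurd (hs (n + 1) (by omega)) (not_lt.2 (h1.trans h2))

lemma infinite_of_strictRan {u : X → NNReal} (hu : Admissible u) (hs : StrictRan u) :
    {x | 0 < u x}.Infinite := by
  intro hfin
  have h1 : (0 : NNReal) < _ := lt_of_le_of_lt bot_le (hs ({x | 0 < u x}.ncard + 1) (by omega))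
  rw [lt_nthLargest_iff u hu.bdd (by omega), ← hfin.cast_ncard_eq] at h1
  have : {x | 0 < u x}.ncard + 1 ≤ {x | 0 < u x}.ncard := by exact_mod_cast h1
  omega

end strict

section concrete

/-- Integer potential on the lattice. -/
def potZ (d : ℕ) (x : ZLat d) : ℤ :=
  ∑ k, (((d : ℤ) + 1) * x k ^ 2 - ((d : ℤ) - ((k : ℕ) : ℤ)) * x k)

def potN (d : ℕ) (x : ZLat d) : ℕ := (potZ d x).toNat

lemma potZ_nonneg (d : ℕ) (x : ZLat d) : 0 ≤ potZ d x := by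
  apply Finset.sum_nonneg
  intro k _
  have hk : ((k : ℕ) : ℤ) < d := by exact_mod_cast k.2
  have hk0 : (0 : ℤ) ≤ ((k : ℕ) : ℤ) := by positivity
  have h1 : |x k| ≤ x k ^ 2 := by
    rw [← sq_abs]
    have := Int.le_self_sq (|x k|)
    exact this
  have h2 := le_abs_self (x k)
  have h3 := abs_nonneg (x k)
  nlinarith

lemma potZ_add (d : ℕ) (x v : ZLat d) (c : ℤ) :
    potZ d (x + c • v) = potZ d x + c * (2 * ((d : ℤ) + 1) * ∑ k, v k * x k +
      c * (((d : ℤ) + 1) * ∑ k, v k * v k) - ∑ k, v k * ((d : ℤ) - ((k : ℕ) : ℤ))) := by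
  unfold potZ
  simp only [Finset.mul_sum, ← Finset.sum_add_distrib, ← Finset.sum_sub_distrib]
  apply Finset.sum_congr rfl
  intro k _
  simp only [Pi.add_apply, Pi.smul_apply, smul_eq_mul]
  ring

/-- `e` is a good direction with lattice generator `v`. -/
structure IsDir {d : ℕ} (e : Fin d → ℝ) (v : ZLat d) : Prop where
  line : ∀ x y, sameLine e x y ↔ ∃ c : ℤ, y = x + c • v
  pair : ∀ x (c : ℤ), pairing e (x + c • v) = pairing e x + 2 * c
  potl : ∃ κ ω : ℤ, 0 < ω ∧ ω < κ ∧ ∀ x (c : ℤ),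
    potZ d (x + c • v) = potZ d x + c * (κ * (pairing e x + c) - ω)

lemma posIdx_pos (m : ℤ) : 0 < posIdx m := by
  unfold posIdx; split_ifs <;> omega

/-- The step associated to a good direction. -/
def IsDir.step {d : ℕ} {e : Fin d → ℝ} {v : ZLat d} (h : IsDir e v) :
    StepD (ZLat d) (potN d) where
  r := sameLine e
  pos := fun x => posIdx (pairing e x)
  eqv := by
    refine ⟨fun x => (h.line x x).2 ⟨0, by simp⟩, ?_, ?_⟩
    · intro x y hxy
      obtain ⟨c, rfl⟩ := (h.line x y).1 hxy
      exact (h.line _ _).2 ⟨-c, by simp⟩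
    · intro x y z hxy hyz
      obtain ⟨c, rfl⟩ := (h.line x y).1 hxy
      obtain ⟨c', rfl⟩ := (h.line _ z).1 hyz
      exact (h.line _ _).2 ⟨c + c', by rw [add_smul, add_assoc]⟩
  pos_pos := fun x => posIdx_pos _
  inj := by
    intro x y hxy hp
    obtain ⟨c, rfl⟩ := (h.line x y).1 hxy
    rw [h.pair] at hp
    have : c = 0 := by
      unfold posIdx at hp
      split_ifs at hp <;> omega
    simp [this]
  surj := by
    intro x n hn
    by_cases hpar : (pairing e x - n) % 2 = 0
    · refine ⟨x + ((n - pairing e x) / 2 : ℤ) • v, (h.line _ _).2 ⟨_, rfl⟩, ?_⟩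
      rw [h.pair]
      unfold posIdx
      split_ifs <;> omega
    · refine ⟨x + ((1 - n - pairing e x) / 2 : ℤ) • v, (h.line _ _).2 ⟨_, rfl⟩, ?_⟩
      rw [h.pair]
      unfold posIdx
      split_ifs <;> omega
  mono := by
    intro x y hxy hp
    obtain ⟨c, rfl⟩ := (h.line x y).1 hxy
    rw [h.pair] at hp
    obtain ⟨κ, ω, h0, h1, hpot⟩ := h.potl
    have hcase : (0 < c ∧ 1 ≤ pairing e x + c) ∨ (c < 0 ∧ pairing e x + c ≤ 0) := by
      unfold posIdx at hp
      split_ifs at hp <;> omega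
    have hlt : potZ d x < potZ d (x + c • v) := by
      rw [hpot]
      generalize pairing e x + c = q at hcase
      have : 0 < c * (κ * q - ω) := by
        rcases hcase with ⟨hc, hq⟩ | ⟨hc, hq⟩
        · exact mul_pos hc (by nlinarith)
        · exact mul_pos_of_neg_of_neg hc (by nlinarith)
      omega
    have := potZ_nonneg d x
    unfold potN
    omega

lemma isDir_std {d : ℕ} (i : Fin d) : IsDir (stdVec d i) (Pi.single i 1 : ZLat d) := by
  have hpair : ∀ x, pairing (stdVec d i) x = 2 * x i := by
    intro x
    unfold pairing
    have : 2 * ∑ k, stdVec d i k * (x k : ℝ) = ((2 * x i : ℤ) : ℝ) := by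
      simp [stdVec]
    rw [this, Int.floor_intCast]
  refine ⟨?_, ?_, ?_⟩
  · intro x y
    constructor
    · rintro ⟨c, hc⟩
      refine ⟨y i - x i, ?_⟩
      funext k
      have := congrFun hc k
      by_cases hk : k = i
      · subst hk; simp
      · simp only [stdVec, Pi.smul_apply, hk, if_false, smul_zero] at this
        have h2 : x k = y k := by exact_mod_cast sub_eq_zero.1 this
        simp [hk, h2]
    · rintro ⟨c, rfl⟩
      refine ⟨-c, ?_⟩
      funext k
      by_cases hk : k = i
      · subst hk; simp [stdVec]
      · simp [stdVec, hk]
  · intro x c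
    rw [hpair, hpair]
    simp [mul_add]
  · refine ⟨(d : ℤ) + 1, (d : ℤ) - ((i : ℕ) : ℤ), ?_, ?_, ?_⟩
    · have := i.2; omega
    · omega
    · intro x c
      rw [potZ_add, hpair]
      simp only [Pi.single_apply, ite_mul, one_mul, zero_mul, Finset.sum_ite_eq',
        Finset.mem_univ, if_true]
      ring

lemma isDir_pair {d : ℕ} (i j : Fin d) (hij : i < j) (s : ℤ) (hs : s = 1 ∨ s = -1)
    (e : Fin d → ℝ) (he : e = fun k => (stdVec d i k + s * stdVec d j k) / 2) :
    IsDir e (fun k => (if k = i then 1 else 0) + s * (if k = j then 1 else 0) : ZLat d) := by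
  subst he
  have hne : j ≠ i := hij.ne'
  have hss : s * s = 1 := by rcases hs with rfl | rfl <;> rfl
  have hpair : ∀ x : ZLat d, pairing (fun k => (stdVec d i k + s * stdVec d j k) / 2) x =
      x i + s * x j := by
    intro x
    unfold pairing
    have : 2 * ∑ k, (stdVec d i k + s * stdVec d j k) / 2 * (x k : ℝ) =
        ((x i + s * x j : ℤ) : ℝ) := by
      rw [Finset.mul_sum]
      have : ∀ k, 2 * ((stdVec d i k + s * stdVec d j k) / 2 * (x k : ℝ)) =
          stdVec d i k * x k + s * (stdVec d j k * x k) := fun k => by ring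
      simp only [this, Finset.sum_add_distrib, ← Finset.mul_sum]
      simp [stdVec]
    rw [this, Int.floor_intCast]
  refine ⟨?_, ?_, ?_⟩
  · intro x y
    constructor
    · rintro ⟨c, hc⟩
      refine ⟨y i - x i, ?_⟩
      have hi := congrFun hc i
      have hj := congrFun hc j
      simp only [stdVec, Pi.smul_apply, smul_eq_mul, hne, hne.symm, if_true, if_false] at hi hj
      have hji : x j - y j = s * (x i - y i) := by
        have : (x j - y j : ℝ) = s * (x i - y i) := by rw [hi, hj]; ring
        exact_mod_cast this
      funext k
      have := congrFun hc k
      by_cases hk : k = i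
      · subst hk; simp [hne.symm]
      · by_cases hk' : k = j
        · subst hk'
          simp [hk]
          linarith
        · simp only [stdVec, Pi.smul_apply, hk, hk', if_false] at this
          have h2 : x k = y k := by
            have h3 : (x k : ℝ) - y k = 0 := by rw [this]; simp
            exact_mod_cast sub_eq_zero.1 h3
          simp [hk, hk', h2]
    · rintro ⟨c, rfl⟩
      refine ⟨-2 * c, ?_⟩
      funext k
      simp only [stdVec, Pi.add_apply, Pi.smul_apply, smul_eq_mul]
      push_cast
      ring
  · intro x c
    rw [hpair, hpair]
    simp [hne, hne.symm]
    linear_combination c * hss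
  · refine ⟨2 * ((d : ℤ) + 1),
      ((d : ℤ) - ((i : ℕ) : ℤ)) + s * ((d : ℤ) - ((j : ℕ) : ℤ)), ?_, ?_, ?_⟩
    · have := i.2
      have := j.2
      have : (i : ℕ) < (j : ℕ) := hij
      rcases hs with rfl | rfl <;> omega
    · have := i.2
      have := j.2
      rcases hs with rfl | rfl <;> omega
    · intro x c
      rw [potZ_add, hpair]
      have h1 : ∀ f : Fin d → ℤ,
          ∑ k, ((if k = i then 1 else 0) + s * (if k = j then 1 else 0)) * f k = f i + s * f j := by
        intro f
        have : ∀ k, ((if k = i then 1 else 0) + s * (if k = j then 1 else 0)) * f k =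
            (if k = i then 1 else 0) * f k + s * ((if k = j then 1 else 0) * f k) :=
          fun k => by ring
        simp only [this, Finset.sum_add_distrib, ← Finset.mul_sum]
        simp
      rw [h1, h1, h1]
      simp only [hne, hne.symm, if_true, if_false]
      linear_combination c * c * ((d : ℤ) + 1) * hss

lemma mem_EvecList_isDir {d : ℕ} {e : Fin d → ℝ} (he : e ∈ EvecList d) : ∃ v, IsDir e v := by
  unfold EvecList at he
  simp only [List.mem_append, List.mem_map, List.mem_flatMap, List.mem_filterMap,
    List.mem_finRange, true_and] at he
  rcases he with (⟨i, rfl⟩ | ⟨i, j, hij⟩) | ⟨i, j, hij⟩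
  · exact ⟨_, isDir_std i⟩
  · split_ifs at hij with h
    · exact ⟨_, isDir_pair i j h 1 (Or.inl rfl) e (by
        rw [← Option.some.inj hij]; funext k; push_cast; ring)⟩
  · split_ifs at hij with h
    · exact ⟨_, isDir_pair i j h (-1) (Or.inr rfl) e (by
        rw [← Option.some.inj hij]; funext k; push_cast; ring)⟩

lemma std_mem_EvecList {d : ℕ} (i : Fin d) : stdVec d i ∈ EvecList d := by
  unfold EvecList
  simp

lemma pair_mem_EvecList {d : ℕ} (i j : Fin d) (h : i < j) :
    (fun k => (stdVec d i k + stdVec d j k) / 2) ∈ EvecList d := by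
  unfold EvecList
  simp only [List.mem_append, List.mem_flatMap, List.mem_filterMap, List.mem_finRange, true_and]
  exact Or.inl (Or.inr ⟨i, j, by simp [h]⟩)

lemma EvecList_pos {d : ℕ} (hd : 2 ≤ d) : 0 < (EvecList d).length :=
  List.length_pos_of_mem (std_mem_EvecList (⟨0, by omega⟩ : Fin d))

lemma seq_mem {d : ℕ} (hd : 2 ≤ d) (k : ℕ) :
    (EvecList d).getD (k % (EvecList d).length) 0 ∈ EvecList d := by
  rw [List.getD_eq_getElem _ _ (Nat.mod_lt _ (EvecList_pos hd))]
  exact List.getElem_mem _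

/-- The sequence of steps. -/
def seqStep {d : ℕ} (hd : 2 ≤ d) (k : ℕ) : StepD (ZLat d) (potN d) :=
  (mem_EvecList_isDir (seq_mem hd k)).choose_spec.step

lemma iterR_eq {d : ℕ} (hd : 2 ≤ d) (u : ZLat d → NNReal) (k : ℕ) :
    iterR d u k = itF (seqStep hd) u k := by
  induction k with
  | zero => rfl
  | succ k ih =>
    show stepR _ (iterR d u k) = _
    rw [ih]
    rfl

lemma RZd_LConv {d : ℕ} (hd : 2 ≤ d) {u : ZLat d → NNReal} (hu : Admissible u) :
    LConv (itF (seqStep hd) u) (RZd d u) := by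
  obtain ⟨g, hg⟩ := exists_LConv (seqStep hd) hu
  have : RZd d u = g := by
    funext x
    apply Tendsto.limUnder_eq
    simp only [iterR_eq hd]
    exact hg.tendsto x
  rwa [this]

lemma stepR_fixed {d : ℕ} (hd : 2 ≤ d) {u : ZLat d → NNReal} (hu : Admissible u)
    (h : RZd d u = u) {e : Fin d → ℝ} (he : e ∈ EvecList d) : stepR e u = u := by
  have hc := RZd_LConv hd hu
  rw [h] at hc
  obtain ⟨k, hk, rfl⟩ := List.mem_iff_getElem.1 he
  have h1 := itF_const _ hu hc k
  have h2 := itF_const _ hu hc (k + 1)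
  rw [← iterR_eq hd] at h1 h2
  simp only [iterR] at h2
  rw [h1, Nat.mod_eq_of_lt hk, List.getD_eq_getElem _ _ hk] at h2
  exact h2

lemma fixed_anti {d : ℕ} (hd : 2 ≤ d) {u : ZLat d → NNReal} (hu : Admissible u)
    (h : RZd d u = u) {e : Fin d → ℝ} (he : e ∈ EvecList d) {x y : ZLat d} (hxy : sameLine e x y)
    (hp : posIdx (pairing e y) < posIdx (pairing e x)) : u x ≤ u y := by
  obtain ⟨v, hv⟩ := mem_EvecList_isDir he
  exact hv.step.anti_of_fixed hu (stepR_fixed hd hu h he) hxy hp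

lemma pos_of_infinite {d : ℕ} {P : ZLat d → Prop} (hinf : {x | P x}.Infinite)
    (hco : ∀ x i (a : ℤ), |a| < |x i| → P x → P (Function.update x i a))
    (hsp : ∀ x i j, i ≠ j → 2 ≤ |x i| → x j = 0 → P x →
      ∃ a b : ℤ, |x i| ≤ 2 * |a| + 1 ∧ |x i| ≤ 2 * |b| + 1 ∧
        P (Function.update (Function.update x i a) j b)) (y : ZLat d) : P y := by
  have base : ∀ M : ℤ, ∃ x, P x ∧ ∃ i, M ≤ |x i| := by
    intro M
    by_contra hcon
    push Not at hcon
    apply hinf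
    apply (Set.Finite.pi' (fun _ : Fin d => Set.finite_Icc (-M) M)).subset
    intro x hx i
    have := hcon x hx i
    rw [abs_lt] at this
    exact ⟨this.1.le, this.2.le⟩
  have spread : ∀ T : Finset (Fin d), ∀ M : ℤ, ∃ x, P x ∧ (∀ j ∈ T, M ≤ |x j|) ∧
      ∃ i, M ≤ |x i| := by
    intro T
    induction T using Finset.induction_on with
    | empty =>
      intro M
      obtain ⟨x, hx, h⟩ := base M
      exact ⟨x, hx, by simp, h⟩
    | insert j T hj ih =>
      intro M
      obtain ⟨x, hx, hT, i, hi⟩ := ih (2 * |M| + 2)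
      have hM := le_abs_self M
      have hM0 := abs_nonneg M
      by_cases hij : i = j
      · subst hij
        refine ⟨x, hx, ?_, i, by omega⟩
        intro k hk
        rcases Finset.mem_insert.1 hk with rfl | hk
        · omega
        · have := hT k hk; omega
      · obtain ⟨z, hz, hzj, hzk⟩ : ∃ z, P z ∧ z j = 0 ∧ ∀ k, k ≠ j → z k = x k := by
          by_cases h0 : x j = 0
          · exact ⟨x, hx, h0, fun _ _ => rfl⟩
          · exact ⟨Function.update x j 0, hco x j 0 (by simpa using h0) hx, by simp,
              fun k hk => by simp [hk]⟩
        have hzi := hzk i hij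
        obtain ⟨a, b, ha, hb, hP⟩ := hsp z i j hij (by rw [hzi]; omega) hzj hz
        rw [hzi] at ha hb
        refine ⟨_, hP, ?_, i, ?_⟩
        · intro k hk
          rcases Finset.mem_insert.1 hk with rfl | hk
          · rw [Function.update_self]; omega
          · have hkj : k ≠ j := fun h => hj (h ▸ hk)
            rw [Function.update_of_ne hkj]
            by_cases hki : k = i
            · subst hki; rw [Function.update_self]; omega
            · rw [Function.update_of_ne hki, hzk k hkj]
              have := hT k hk
              omega
        · rw [Function.update_of_ne hij, Function.update_self]; omega
  obtain ⟨x, hx, hT, -⟩ := spread Finset.univ (∑ k, |y k| + 1)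
  have hbig : ∀ k, |y k| < |x k| := by
    intro k
    have h1 := hT k (Finset.mem_univ k)
    have h2 := Finset.single_le_sum (f := fun k => |y k|) (fun i _ => abs_nonneg (y i))
      (Finset.mem_univ k)
    omega
  have repl : ∀ T : Finset (Fin d), P (T.piecewise y x) := by
    intro T
    induction T using Finset.induction_on with
    | empty => simpa using hx
    | insert j T hj ih =>
      rw [Finset.piecewise_insert]
      apply hco _ _ _ _ ih
      rw [Finset.piecewise_eq_of_notMem _ _ _ hj]
      exact hbig j
  simpa using repl Finset.univ

lemma posIdx_lt (m n : ℤ) (h : |m| < |n|) (hp : (n - m) % 2 = 0) : posIdx m < posIdx n := by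
  unfold posIdx
  rcases abs_cases m with h1 | h1 <;> rcases abs_cases n with h2 | h2 <;> split_ifs <;> omega

lemma pos_of_symm {d : ℕ} (hd : 2 ≤ d) {u : ZLat d → NNReal} (hu : Admissible u)
    (h : RZd d u = u) (hs : StrictRan u) (y : ZLat d) : 0 < u y := by
  have hpstd : ∀ i (x : ZLat d), pairing (stdVec d i) x = 2 * x i := by
    intro i x
    unfold pairing
    have : 2 * ∑ k, stdVec d i k * (x k : ℝ) = ((2 * x i : ℤ) : ℝ) := by
      simp [stdVec]
    rw [this, Int.floor_intCast]
  have hppair : ∀ i j (x : ZLat d), pairing (fun k => (stdVec d i k + stdVec d j k) / 2) x =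
      x i + x j := by
    intro i j x
    unfold pairing
    have : 2 * ∑ k, (stdVec d i k + stdVec d j k) / 2 * (x k : ℝ) =
        ((x i + x j : ℤ) : ℝ) := by
      rw [Finset.mul_sum]
      have : ∀ k, 2 * ((stdVec d i k + stdVec d j k) / 2 * (x k : ℝ)) =
          stdVec d i k * x k + stdVec d j k * x k := fun k => by ring
      simp only [this, Finset.sum_add_distrib]
      simp [stdVec]
    rw [this, Int.floor_intCast]
  refine pos_of_infinite (P := fun x => 0 < u x) (infinite_of_strictRan hu hs) ?_ ?_ y
  · intro x i a ha hx
    refine lt_of_lt_of_le hx (fixed_anti hd hu h (std_mem_EvecList i) ?_ ?_)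
    · refine ⟨x i - a, ?_⟩
      funext k
      by_cases hk : k = i
      · subst hk; simp [stdVec]
      · simp [stdVec, hk]
    · rw [hpstd, hpstd, Function.update_self]
      apply posIdx_lt _ _ _ (by omega)
      rw [abs_mul, abs_mul]
      simpa using ha
  · have main : ∀ (e : Fin d → ℝ) (i j : Fin d), i ≠ j → e ∈ EvecList d →
        (e = fun k => (stdVec d i k + stdVec d j k) / 2) → ∀ x : ZLat d, 2 ≤ |x i| → x j = 0 →
        0 < u x → ∃ a b : ℤ, |x i| ≤ 2 * |a| + 1 ∧ |x i| ≤ 2 * |b| + 1 ∧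
          0 < u (Function.update (Function.update x i a) j b) := by
      intro e i j hij he hee x hxi hxj hx
      refine ⟨x i - x i / 2, - (x i / 2), ?_, ?_,
        lt_of_lt_of_le hx (fixed_anti hd hu h he ?_ ?_)⟩
      · rcases abs_cases (x i) with h1 | h1 <;>
          rcases abs_cases (x i - x i / 2) with h2 | h2 <;> omega
      · rcases abs_cases (x i) with h1 | h1 <;>
          rcases abs_cases (-(x i / 2)) with h2 | h2 <;> omega
      · rw [hee]
        refine ⟨2 * ((x i / 2 : ℤ) : ℝ), ?_⟩
        funext k
        by_cases hk : k = j
        · subst hk; simp [stdVec, hij.symm, hxj]; ring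
        · by_cases hk' : k = i
          · subst hk'; simp [stdVec, hij]; ring
          · simp [stdVec, hk, hk']
      · rw [hee, hppair, hppair, Function.update_self, Function.update_of_ne hij,
          Function.update_self, hxj]
        apply posIdx_lt _ _ _ (by omega)
        rcases abs_cases (x i) with h1 | h1 <;>
          rcases abs_cases (x i - x i / 2 + -(x i / 2)) with h2 | h2 <;>
          rw [add_zero] <;> omega
    intro x i j hij hxi hxj hx
    rcases lt_or_gt_of_ne hij with hlt | hlt
    · exact main _ i j hij (pair_mem_EvecList i j hlt) rfl x hxi hxj hx
    · exact main _ i j hij (pair_mem_EvecList j i hlt) (by funext k; ring) x hxi hxj hx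

end concrete

/-- Discrete Hardy–Littlewood inequality, with the characterization of the equality
case. -/
theorem stmt14 (d : ℕ) (hd : 2 ≤ d) (u v : ZLat d → NNReal)
    (hu : Admissible u) (hv : Admissible v) :
    (∑' x : ZLat d, ((u x * v x : NNReal) : ENNReal) ≤
      ∑' x : ZLat d, ((RZd d u x * RZd d v x : NNReal) : ENNReal)) ∧
    (RZd d u = u → StrictRan u →
      (∑' x : ZLat d, ((RZd d u x * RZd d v x : NNReal) : ENNReal)) < ⊤ →
      ((∑' x : ZLat d, ((u x * v x : NNReal) : ENNReal)) =
        (∑' x : ZLat d, ((RZd d u x * RZd d v x : NNReal) : ENNReal)) ↔ v = RZd d v)) := by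
  have hcu := RZd_LConv hd hu
  have hcv := RZd_LConv hd hv
  refine ⟨itF_HL (seqStep hd) hu hv hcu hcv, ?_⟩
  intro hsym hs hfin
  have hinj := inj_of_strictRan hu (pos_of_symm hd hu hsym hs) hs
  rw [hsym] at hfin hcu ⊢
  constructor
  · intro heq
    exact itF_strict (seqStep hd) hu hv hinj hcu hcv hfin heq
  · intro h
    rw [← h]

end
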